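/- Let b and b′ be graphs over a countably infinite set X with potentials q and q′, associated forms h and h′ (on finitely supported functions) and operators H = L_b + q, H′ = L_{b′} + q′. Let v be a strictly positive H-superharmonic function (v ∈ F_b(X), Hv ≥ 0 on X) such that v^{1/2} ∈ F_{b′}(X) is H′-harmonic on X (H′(v^{1/2}) = 0). Assume h′ is critical in X, i.e. h′(φ) ≥ 0 for all finitely supported φ and there is no w̃ : X → [0,∞), w̃ ≠ 0, with h′(φ) ≥ Σ_x w̃(x)φ(x)² for all finitely supported φ. Let W ⊆ X and C ≥ 0 be such that h(φ) ≤ C·h′(φ) for all finitely supported φ with support in X∖W. Then for every function f : X → ℝ supported in X∖W (not necessarily finitely supported), h_v(f/v) ≤ C·h′_{v^{1/2}}(f/v^{1/2}), where for a graph a over X and a strictly positive function g the extended form is a_g(f) := (1/2)·Σ_{x,y∈X} a(x,y)·g(x)g(y)·(f(x) − f(y))² ∈ [0,∞]. -/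

import Mathlib

open scoped ENNReal

/-- `f` belongs to `F(X)`: `∑_y b x y |f y| < ∞` for every `x`. -/
def memF {X : Type} (b : X → X → ℝ) (f : X → ℝ) : Prop :=
  ∀ x : X, Summable fun y => b x y * |f y|

/-- The formal graph Laplacian `L f x = ∑_y b x y (f x - f y)`. -/
noncomputable def lap {X : Type} (b : X → X → ℝ) (f : X → ℝ) (x : X) : ℝ :=
  ∑' y : X, b x y * (f x - f y)

/-- The formal Schrödinger operator `H = L + q`. -/
noncomputable def schrod {X : Type} (b : X → X → ℝ) (q : X → ℝ) (f : X → ℝ) (x : X) : ℝ :=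
  lap b f x + q x * f x

/-- The quadratic form `h(φ)` of `H = L + q`. -/
noncomputable def quadForm {X : Type} (b : X → X → ℝ) (q : X → ℝ) (φ : X → ℝ) : ℝ :=
  (1 / 2) * (∑' p : X × X, b p.1 p.2 * (φ p.1 - φ p.2) ^ 2) + ∑' x : X, q x * φ x ^ 2

/-- The extended ground-state-transformed form `a_g(f)` with values in `[0,∞]`. -/
noncomputable def extForm {X : Type} (a : X → X → ℝ) (g f : X → ℝ) : ℝ≥0∞ :=
  (1 / 2 : ℝ≥0∞) * ∑' p : X × X,
    ENNReal.ofReal (a p.1 p.2 * g p.1 * g p.2 * (f p.1 - f p.2) ^ 2)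

/-!
The ground state transform turns the hypothesis on finitely supported functions `φ` vanishing on
`W` into `h_v(φ/v) ≤ h(φ) ≤ C h'(φ) = C h'_u(φ/u)`. Criticality of `h'` means that no point mass is
a Hardy weight, so every point carries finitely supported functions of prescribed value there and
arbitrarily small energy `h'_u`; maxima of these dominate any given function on a finite set at
arbitrarily small cost. Clamping `f/u` by them yields finitely supported functions that agree with
`f/u` on a finite set and whose energy exceeds `h'_u(f/u)` by at most `ε`. Since `h_v` is the
supremum of its finite partial sums, the comparison passes to `f`.
-/

section Graph

variable {X : Type} {a : X → X → ℝ} {q g u φ : X → ℝ}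

/-- `a` is a graph over `X`: a symmetric nonnegative weight with finite vertex degrees. Loops are
allowed, since they contribute neither to Laplacians nor to forms. -/
structure IsGraph (a : X → X → ℝ) : Prop where
  nonneg : ∀ x y, 0 ≤ a x y
  symm : ∀ x y, a x y = a y x
  summable : ∀ x, Summable fun y => a x y

/-- `g` is a strictly positive superharmonic function of the Schrödinger operator `L_a + q`, the
kind of function by which forms are transformed in `extForm`. -/
structure IsPosSuperharmonic (a : X → X → ℝ) (q g : X → ℝ) : Prop where
  pos : ∀ x, 0 < g x
  memF : memF a g
  schrod_nonneg : ∀ x, 0 ≤ schrod a q g x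

/-- The form of `L_a + q` satisfies a Hardy inequality with a nontrivial nonnegative weight; a
nonnegative form is critical when this fails. -/
def HasHardyWeight (a : X → X → ℝ) (q : X → ℝ) : Prop :=
  ∃ w : X → ℝ, (∀ x, 0 ≤ w x) ∧ w ≠ 0 ∧ ∀ φ : X → ℝ, (Function.support φ).Finite →
    ∑' x, w x * φ x ^ 2 ≤ quadForm a q φ

section ExtForm

variable {f f₁ f₂ : X → ℝ}

theorem extForm_summand_nonneg (ha : ∀ x y, 0 ≤ a x y) (hg : ∀ x, 0 ≤ g x) (f : X → ℝ)
    (p : X × X) : 0 ≤ a p.1 p.2 * g p.1 * g p.2 * (f p.1 - f p.2) ^ 2 :=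
  mul_nonneg (mul_nonneg (mul_nonneg (ha _ _) (hg _)) (hg _)) (sq_nonneg _)

theorem extForm_eq_ofReal_of_hasSum (ha : ∀ x y, 0 ≤ a x y) (hg : ∀ x, 0 ≤ g x) {s : ℝ}
    (hs : HasSum (fun p : X × X => a p.1 p.2 * g p.1 * g p.2 * (f p.1 - f p.2) ^ 2) s) :
    extForm a g f = ENNReal.ofReal (s / 2) := by
  rw [extForm, ← ENNReal.ofReal_tsum_of_nonneg (extForm_summand_nonneg ha hg f) hs.summable,
    hs.tsum_eq, ENNReal.ofReal_div_of_pos two_pos, ENNReal.ofReal_ofNat, one_div,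
    ENNReal.div_eq_inv_mul]

theorem extForm_zero (a : X → X → ℝ) (g : X → ℝ) : extForm a g 0 = 0 := by
  simp [extForm]

theorem extForm_const_mul (a : X → X → ℝ) (g f : X → ℝ) (c : ℝ) :
    extForm a g (fun x => c * f x) = ENNReal.ofReal (c ^ 2) * extForm a g f := by
  rw [extForm, extForm, mul_left_comm,
    ← ENNReal.tsum_mul_left (a := ENNReal.ofReal (c ^ 2))]
  congr 1
  refine tsum_congr fun p => ?_
  rw [← ENNReal.ofReal_mul (sq_nonneg c)]
  congr 1
  ring

theorem extForm_le_add_of_abs_sub_le_max (ha : ∀ x y, 0 ≤ a x y) (hg : ∀ x, 0 ≤ g x)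
    (h : ∀ x y, |f x - f y| ≤ max |f₁ x - f₁ y| |f₂ x - f₂ y|) :
    extForm a g f ≤ extForm a g f₁ + extForm a g f₂ := by
  have sq_le (x y : X) : (f x - f y) ^ 2 ≤ (f₁ x - f₁ y) ^ 2 + (f₂ x - f₂ y) ^ 2 := by
    rcases le_max_iff.mp (h x y) with h₁ | h₂
    · exact (sq_le_sq.mpr h₁).trans (le_add_of_nonneg_right (sq_nonneg _))
    · exact (sq_le_sq.mpr h₂).trans (le_add_of_nonneg_left (sq_nonneg _))
  rw [extForm, extForm, extForm, ← mul_add, ← ENNReal.tsum_add]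
  gcongr with p
  rw [← ENNReal.ofReal_add (extForm_summand_nonneg ha hg f₁ p)
    (extForm_summand_nonneg ha hg f₂ p), ← mul_add]
  exact ENNReal.ofReal_le_ofReal <| mul_le_mul_of_nonneg_left (sq_le _ _) <|
    mul_nonneg (mul_nonneg (ha _ _) (hg _)) (hg _)

theorem extForm_le_of_forall_finset {c : ℝ≥0∞}
    (h : ∀ K : Finset X, ∃ φ : X → ℝ, (∀ x ∈ K, φ x = f x) ∧ extForm a g φ ≤ c) :
    extForm a g f ≤ c := by
  classical
  rw [extForm, ← ENNReal.tsum_mul_left]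
  refine ENNReal.summable.tsum_le_of_sum_le fun P => ?_
  obtain ⟨φ, hφ, hle⟩ := h (P.image Prod.fst ∪ P.image Prod.snd)
  rw [extForm, ← ENNReal.tsum_mul_left] at hle
  refine le_trans (Finset.sum_le_sum fun p hp => ?_) ((ENNReal.sum_le_tsum P).trans hle)
  rw [hφ p.1 (Finset.mem_union_left _ (Finset.mem_image_of_mem _ hp)),
    hφ p.2 (Finset.mem_union_right _ (Finset.mem_image_of_mem _ hp))]

end ExtForm

section GroundStateTransform

theorem summable_fst_mul_of_finite_support {ι κ : Type*} {c : ι → ℝ} {k : ι × κ → ℝ}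
    (hc : (Function.support c).Finite) (hk : ∀ i, Summable fun j => k (i, j)) :
    Summable fun p : ι × κ => c p.1 * k p := by
  refine .of_norm <| (summable_prod_of_nonneg fun p => norm_nonneg _).mpr
    ⟨fun i => ((hk i).mul_left (c i)).norm, summable_of_hasFiniteSupport (hc.subset ?_)⟩
  refine Function.support_subset_iff'.mpr fun i hi => ?_
  simp only [Function.notMem_support.mp hi, zero_mul, norm_zero, tsum_zero]

theorem finite_support_mul_sq (c : X → ℝ) (hφ : (Function.support φ).Finite) :
    (Function.support fun x => c x * φ x ^ 2).Finite :=
  hφ.subset <| Function.support_subset_iff'.mpr fun x hx => by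
    simp only [Function.notMem_support.mp hx, ne_eq, OfNat.ofNat_ne_zero, not_false_eq_true,
      zero_pow, mul_zero]

theorem IsGraph.summable_lap (ha : IsGraph a) (hg : memF a g) (x : X) :
    Summable fun y => a x y * (g x - g y) := by
  have hag : Summable fun y => a x y * g y :=
    .of_norm <| (hg x).congr fun y => by rw [norm_mul, Real.norm_of_nonneg (ha.nonneg x y),
      Real.norm_eq_abs]
  exact (((ha.summable x).mul_right (g x)).sub hag).congr fun y => (mul_sub _ _ _).symm

theorem IsGraph.hasSum_mul_lap (ha : IsGraph a) (hg : memF a g) {c : X → ℝ}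
    (hc : (Function.support c).Finite) :
    HasSum (fun p : X × X => c p.1 * (a p.1 p.2 * (g p.1 - g p.2))) (∑' x, c x * lap a g x) := by
  have hs : Summable fun p : X × X => c p.1 * (a p.1 p.2 * (g p.1 - g p.2)) :=
    summable_fst_mul_of_finite_support hc (ha.summable_lap hg)
  convert hs.hasSum using 1
  rw [hs.tsum_prod' fun x => (ha.summable_lap hg x).mul_left (c x)]
  exact tsum_congr fun x => tsum_mul_left.symm

theorem IsGraph.summable_energy (ha : IsGraph a) (hφ : (Function.support φ).Finite) :
    Summable fun p : X × X => a p.1 p.2 * (φ p.1 - φ p.2) ^ 2 := by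
  have hφ2 : (Function.support fun x => φ x ^ 2).Finite := by
    simpa only [one_mul] using finite_support_mul_sq (fun _ => 1) hφ
  have hs : Summable fun p : X × X => φ p.1 ^ 2 * a p.1 p.2 :=
    summable_fst_mul_of_finite_support (k := fun p => a p.1 p.2) hφ2 ha.summable
  have hs' : Summable fun p : X × X => φ p.2 ^ 2 * a p.2 p.1 :=
    (Equiv.prodComm X X).summable_iff.mpr hs
  refine .of_nonneg_of_le (fun p => mul_nonneg (ha.nonneg _ _) (sq_nonneg _)) (fun p => ?_)
    ((hs.add hs').mul_left 2)
  calc a p.1 p.2 * (φ p.1 - φ p.2) ^ 2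
      ≤ a p.1 p.2 * (2 * (φ p.1 ^ 2 + φ p.2 ^ 2)) :=
        mul_le_mul_of_nonneg_left (by linarith [sq_nonneg (φ p.1 + φ p.2)]) (ha.nonneg _ _)
    _ = 2 * (φ p.1 ^ 2 * a p.1 p.2 + φ p.2 ^ 2 * a p.2 p.1) := by rw [ha.symm p.2 p.1]; ring

theorem tsum_schrod_div_mul_sq (hg : ∀ x, g x ≠ 0) (hφ : (Function.support φ).Finite) :
    ∑' x, schrod a q g x / g x * φ x ^ 2 =
      ∑' x, φ x ^ 2 / g x * lap a g x + ∑' x, q x * φ x ^ 2 := by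
  have hlap : Summable fun x => φ x ^ 2 / g x * lap a g x :=
    (summable_of_hasFiniteSupport (finite_support_mul_sq (fun x => lap a g x / g x) hφ)).congr
      fun x => by ring
  have hq : Summable fun x => q x * φ x ^ 2 :=
    summable_of_hasFiniteSupport (finite_support_mul_sq q hφ)
  rw [← hlap.tsum_add hq]
  refine tsum_congr fun x => ?_
  have := hg x
  rw [schrod]
  field_simp

theorem IsGraph.hasSum_groundStateTransform (ha : IsGraph a) (q : X → ℝ) (hg : ∀ x, g x ≠ 0)
    (hmem : memF a g) (hφ : (Function.support φ).Finite) :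
    HasSum (fun p : X × X =>
        a p.1 p.2 * g p.1 * g p.2 * (φ p.1 / g p.1 - φ p.2 / g p.2) ^ 2)
      (2 * (quadForm a q φ - ∑' x, schrod a q g x / g x * φ x ^ 2)) := by
  have hc : (Function.support fun x => φ x ^ 2 / g x).Finite := by
    simpa only [div_eq_inv_mul] using finite_support_mul_sq (fun x => (g x)⁻¹) hφ
  have hlap := ha.hasSum_mul_lap hmem hc
  have hlap' := (Equiv.prodComm X X).hasSum_iff.mpr hlap
  have hvalue : 2 * (quadForm a q φ - ∑' x, schrod a q g x / g x * φ x ^ 2) =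
      ∑' p : X × X, a p.1 p.2 * (φ p.1 - φ p.2) ^ 2 -
        (∑' x, φ x ^ 2 / g x * lap a g x + ∑' x, φ x ^ 2 / g x * lap a g x) := by
    rw [tsum_schrod_div_mul_sq hg hφ, quadForm]
    ring
  rw [hvalue]
  refine ((ha.summable_energy hφ).hasSum.sub (hlap.add hlap')).congr_fun fun p => ?_
  have h₁ := hg p.1
  have h₂ := hg p.2
  simp only [Function.comp_apply, Equiv.prodComm_apply, Prod.fst_swap, Prod.snd_swap,
    ha.symm p.2 p.1]
  field_simp
  ring

theorem IsPosSuperharmonic.tsum_schrod_div_mul_sq_le_quadForm (hg : IsPosSuperharmonic a q g)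
    (ha : IsGraph a) (hφ : (Function.support φ).Finite) :
    ∑' x, schrod a q g x / g x * φ x ^ 2 ≤ quadForm a q φ := by
  have hsum := ha.hasSum_groundStateTransform q (fun x => (hg.pos x).ne') hg.memF hφ
  have := hsum.nonneg <| extForm_summand_nonneg ha.nonneg (fun x => (hg.pos x).le) fun x =>
    φ x / g x
  linarith

theorem IsPosSuperharmonic.extForm_div_eq (hg : IsPosSuperharmonic a q g) (ha : IsGraph a)
    (hφ : (Function.support φ).Finite) :
    extForm a g (fun x => φ x / g x) =
      ENNReal.ofReal (quadForm a q φ - ∑' x, schrod a q g x / g x * φ x ^ 2) := by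
  have hsum := ha.hasSum_groundStateTransform q (fun x => (hg.pos x).ne') hg.memF hφ
  have hext := extForm_eq_ofReal_of_hasSum (f := fun x => φ x / g x) ha.nonneg
    (fun x => (hg.pos x).le) hsum
  rwa [mul_div_cancel_left₀ _ two_ne_zero] at hext

theorem IsPosSuperharmonic.schrod_div_nonneg (hg : IsPosSuperharmonic a q g) (x : X) :
    0 ≤ schrod a q g x / g x :=
  div_nonneg (hg.schrod_nonneg x) (hg.pos x).le

theorem IsPosSuperharmonic.extForm_div_le (hg : IsPosSuperharmonic a q g) (ha : IsGraph a)
    (hφ : (Function.support φ).Finite) :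
    extForm a g (fun x => φ x / g x) ≤ ENNReal.ofReal (quadForm a q φ) := by
  rw [hg.extForm_div_eq ha hφ]
  exact ENNReal.ofReal_le_ofReal <| sub_le_self _ <| tsum_nonneg fun x =>
    mul_nonneg (hg.schrod_div_nonneg x) (sq_nonneg _)

end GroundStateTransform

section Critical

theorem IsPosSuperharmonic.schrod_eq_zero (hu : IsPosSuperharmonic a q u) (ha : IsGraph a)
    (hcrit : ¬ HasHardyWeight a q) (x : X) : schrod a q u x = 0 := by
  by_contra hx
  refine hcrit ⟨fun x => schrod a q u x / u x, hu.schrod_div_nonneg, fun h => ?_,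
    fun φ hφ => hu.tsum_schrod_div_mul_sq_le_quadForm ha hφ⟩
  exact div_ne_zero hx (hu.pos x).ne' (congrFun h x)

theorem IsPosSuperharmonic.extForm_div_eq_of_not_hasHardyWeight (hu : IsPosSuperharmonic a q u)
    (ha : IsGraph a) (hcrit : ¬ HasHardyWeight a q) (hφ : (Function.support φ).Finite) :
    extForm a u (fun x => φ x / u x) = ENNReal.ofReal (quadForm a q φ) := by
  simp only [hu.extForm_div_eq ha hφ, hu.schrod_eq_zero ha hcrit, zero_div, zero_mul, tsum_zero,
    sub_zero]

theorem exists_quadForm_lt_of_not_hasHardyWeight (hcrit : ¬ HasHardyWeight a q) (x : X) {c : ℝ}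
    (hc : 0 < c) :
    ∃ φ : X → ℝ, (Function.support φ).Finite ∧ quadForm a q φ < c * φ x ^ 2 := by
  classical
  contrapose! hcrit
  have hnonneg : 0 ≤ (Pi.single x c : X → ℝ) := Pi.single_nonneg.mpr hc.le
  refine ⟨Pi.single x c, fun y => hnonneg y, Pi.single_ne_zero_iff.mpr hc.ne', fun φ hφ => ?_⟩
  rw [tsum_eq_single x fun y hy => by rw [Pi.single_eq_of_ne hy, zero_mul], Pi.single_eq_same]
  exact hcrit φ hφ

theorem IsPosSuperharmonic.exists_eq_extForm_le (hu : IsPosSuperharmonic a q u) (ha : IsGraph a)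
    (hcrit : ¬ HasHardyWeight a q) (x : X) (t : ℝ) {ε : ℝ} (hε : 0 < ε) :
    ∃ e : X → ℝ, (Function.support e).Finite ∧ e x = t ∧ extForm a u e ≤ ENNReal.ofReal ε := by
  have hc : 0 < ε / ((t * u x) ^ 2 + 1) := by positivity
  obtain ⟨φ, hφ, hlt⟩ := exists_quadForm_lt_of_not_hasHardyWeight hcrit x hc
  have hφ_nonneg : 0 ≤ quadForm a q φ :=
    (tsum_nonneg fun y => mul_nonneg (hu.schrod_div_nonneg y) (sq_nonneg _)).trans
      (hu.tsum_schrod_div_mul_sq_le_quadForm ha hφ)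
  have hφx : φ x ≠ 0 := by
    intro h
    rw [h] at hlt
    linarith
  have hux := (hu.pos x).ne'
  refine ⟨fun y => t * u x / φ x * (φ y / u y), hφ.subset ?_, ?_, ?_⟩
  · exact Function.support_subset_iff'.mpr fun y hy => by
      simp only [Function.notMem_support.mp hy, zero_div, mul_zero]
  · field_simp
  · rw [extForm_const_mul]
    refine (mul_le_mul_right (hu.extForm_div_le ha hφ) _).trans ?_
    rw [← ENNReal.ofReal_mul (sq_nonneg _)]
    refine ENNReal.ofReal_le_ofReal ?_
    calc (t * u x / φ x) ^ 2 * quadForm a q φ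
        ≤ (t * u x / φ x) ^ 2 * (ε / ((t * u x) ^ 2 + 1) * φ x ^ 2) := by gcongr
      _ = (t * u x) ^ 2 / ((t * u x) ^ 2 + 1) * ε := by field_simp
      _ ≤ ε := mul_le_of_le_one_left hε.le (div_le_one_of_le₀ (by linarith) (by positivity))

theorem IsPosSuperharmonic.exists_le_extForm_le (hu : IsPosSuperharmonic a q u) (ha : IsGraph a)
    (hcrit : ¬ HasHardyWeight a q) (k : X → ℝ) (K : Finset X) {ε : ℝ} (hε : 0 < ε) :
    ∃ e : X → ℝ, (Function.support e).Finite ∧ 0 ≤ e ∧ (∀ x ∈ K, k x ≤ e x) ∧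
      extForm a u e ≤ ENNReal.ofReal ε := by
  classical
  induction K using Finset.induction_on generalizing ε with
  | empty => exact ⟨0, by simp, le_rfl, by simp, by simp [extForm_zero]⟩
  | insert x K _ ih =>
    obtain ⟨e, he_fin, he_nonneg, hke, he⟩ := ih (half_pos hε)
    obtain ⟨d, hd_fin, hdx, hd⟩ := hu.exists_eq_extForm_le ha hcrit x (k x) (half_pos hε)
    refine ⟨e ⊔ d, (he_fin.union hd_fin).subset (Function.support_sup e d),
      he_nonneg.trans le_sup_left, fun y hy => ?_, ?_⟩
    · rcases Finset.mem_insert.mp hy with rfl | hyK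
      · exact hdx.ge.trans (le_max_right _ _)
      · exact (hke y hyK).trans (le_max_left _ _)
    · calc extForm a u (e ⊔ d) ≤ extForm a u e + extForm a u d :=
            extForm_le_add_of_abs_sub_le_max ha.nonneg (fun y => (hu.pos y).le) fun y z =>
              abs_max_sub_max_le_max _ _ _ _
        _ ≤ ENNReal.ofReal (ε / 2) + ENNReal.ofReal (ε / 2) := add_le_add he hd
        _ = ENNReal.ofReal ε := by
            rw [← ENNReal.ofReal_add (half_pos hε).le (half_pos hε).le, add_halves]

theorem abs_clamp_sub_clamp_le_max (s t s' t' : ℝ) :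
    |max (-s) (min s t) - max (-s') (min s' t')| ≤ max |s - s'| |t - t'| := by
  have hneg : |-s - -s'| = |s - s'| := by rw [neg_sub_neg, abs_sub_comm]
  exact (abs_max_sub_max_le_max _ _ _ _).trans <|
    max_le (hneg.trans_le (le_max_left _ _)) (abs_min_sub_min_le_max _ _ _ _)

-- Clamping `g` between `-e` and `e`, rather than multiplying it by a cutoff function, costs only
-- the energy of `e` even when `g` is unbounded.
theorem IsPosSuperharmonic.exists_finite_support_extForm_le_add (hu : IsPosSuperharmonic a q u)
    (ha : IsGraph a) (hcrit : ¬ HasHardyWeight a q) (g : X → ℝ) (K : Finset X) {ε : ℝ}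
    (hε : 0 < ε) :
    ∃ φ : X → ℝ, (Function.support φ).Finite ∧ Function.support φ ⊆ Function.support g ∧
      (∀ x ∈ K, φ x = g x) ∧ extForm a u φ ≤ ENNReal.ofReal ε + extForm a u g := by
  obtain ⟨e, he_fin, he_nonneg, hge, he⟩ :=
    hu.exists_le_extForm_le ha hcrit (fun x => |g x|) K hε
  refine ⟨fun x => max (-e x) (min (e x) (g x)), he_fin.subset ?_, ?_, fun x hx => ?_, ?_⟩
  · refine Function.support_subset_iff'.mpr fun x hx => ?_
    rw [Function.notMem_support.mp hx, neg_zero, max_eq_left (min_le_left _ _)]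
  · refine Function.support_subset_iff'.mpr fun x hx => ?_
    have hex : 0 ≤ e x := he_nonneg x
    rw [Function.notMem_support.mp hx, min_eq_right hex, max_eq_right (neg_nonpos.mpr hex)]
  · obtain ⟨hlower, hupper⟩ := abs_le.mp (hge x hx)
    beta_reduce
    rw [min_eq_right hupper, max_eq_right hlower]
  · exact (extForm_le_add_of_abs_sub_le_max ha.nonneg (fun x => (hu.pos x).le) fun x y =>
      abs_clamp_sub_clamp_le_max _ _ _ _).trans (add_le_add_left he _)

end Critical

end Graph

section Comparison

variable {X : Type} {b b' : X → X → ℝ} {q q' v u : X → ℝ} {W : Set X} {C : ℝ}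

theorem extForm_div_le_of_finite_support (hb : IsGraph b) (hb' : IsGraph b')
    (hv : IsPosSuperharmonic b q v) (hu : IsPosSuperharmonic b' q' u)
    (hcrit : ¬ HasHardyWeight b' q') (hC : 0 ≤ C) {φ : X → ℝ} (hφ : (Function.support φ).Finite)
    (hdom : quadForm b q φ ≤ C * quadForm b' q' φ) :
    extForm b v (fun x => φ x / v x) ≤
      ENNReal.ofReal C * extForm b' u (fun x => φ x / u x) :=
  calc extForm b v (fun x => φ x / v x)
      ≤ ENNReal.ofReal (quadForm b q φ) := hv.extForm_div_le hb hφ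
    _ ≤ ENNReal.ofReal (C * quadForm b' q' φ) := ENNReal.ofReal_le_ofReal hdom
    _ = ENNReal.ofReal C * extForm b' u (fun x => φ x / u x) := by
        rw [hu.extForm_div_eq_of_not_hasHardyWeight hb' hcrit hφ, ENNReal.ofReal_mul hC]

theorem stmt17_general (hb : IsGraph b) (hb' : IsGraph b') (hv : IsPosSuperharmonic b q v)
    (hu : IsPosSuperharmonic b' q' u) (hcrit : ¬ HasHardyWeight b' q') (hC : 0 ≤ C)
    (hdom : ∀ φ : X → ℝ, (Function.support φ).Finite → (∀ x ∈ W, φ x = 0) →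
      quadForm b q φ ≤ C * quadForm b' q' φ)
    {f : X → ℝ} (hf : ∀ x ∈ W, f x = 0) :
    extForm b v (fun x => f x / v x) ≤
      ENNReal.ofReal C * extForm b' u (fun x => f x / u x) := by
  have approx {ε : ℝ} (hε : 0 < ε) : extForm b v (fun x => f x / v x) ≤
      ENNReal.ofReal C * (ENNReal.ofReal ε + extForm b' u (fun x => f x / u x)) := by
    refine extForm_le_of_forall_finset fun K => ?_
    obtain ⟨g, hg_fin, hg_supp, hgK, hg⟩ :=
      hu.exists_finite_support_extForm_le_add hb' hcrit (fun x => f x / u x) K hε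
    have hgu : (fun x => g x * u x / u x) = g :=
      funext fun x => mul_div_cancel_right₀ (g x) (hu.pos x).ne'
    have hgu_fin : (Function.support fun x => g x * u x).Finite :=
      hg_fin.subset (Function.support_mul_subset_left g u)
    have hguW : ∀ x ∈ W, g x * u x = 0 := fun x hx => by
      rw [Function.support_subset_iff'.mp hg_supp x (by simp [hf x hx]), zero_mul]
    have hle := extForm_div_le_of_finite_support hb hb' hv hu hcrit hC hgu_fin
      (hdom _ hgu_fin hguW)
    rw [hgu] at hle
    refine ⟨fun x => g x * u x / v x, fun x hx => ?_, hle.trans (mul_le_mul_right hg _)⟩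
    beta_reduce
    rw [hgK x hx, div_mul_cancel₀ _ (hu.pos x).ne']
  have lim : Filter.Tendsto (fun ε : ℝ => ENNReal.ofReal C *
      (ENNReal.ofReal ε + extForm b' u (fun x => f x / u x))) (nhdsWithin 0 (Set.Ioi 0))
      (nhds (ENNReal.ofReal C * extForm b' u (fun x => f x / u x))) := by
    have h0 : Filter.Tendsto ENNReal.ofReal (nhdsWithin 0 (Set.Ioi 0)) (nhds 0) := by
      simpa only [ENNReal.ofReal_zero] using
        (ENNReal.continuous_ofReal.tendsto 0).mono_left nhdsWithin_le_nhds
    simpa only [zero_add] using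
      ENNReal.Tendsto.const_mul (h0.add_const _) (Or.inr ENNReal.ofReal_ne_top)
  exact ge_of_tendsto lim (eventually_mem_nhdsWithin.mono fun ε hε => approx hε)

end Comparison

/-- extension of a comparison of forms outside `W` to
not necessarily finitely supported functions. -/
theorem stmt17 (X : Type) [Countable X] [Infinite X]
    (b b' : X → X → ℝ) (q q' : X → ℝ)
    (hb_nonneg : ∀ x y, 0 ≤ b x y) (hb_symm : ∀ x y, b x y = b y x)
    (hb_diag : ∀ x, b x x = 0) (hb_row : ∀ x, Summable fun y => b x y)
    (hb'_nonneg : ∀ x y, 0 ≤ b' x y) (hb'_symm : ∀ x y, b' x y = b' y x)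
    (hb'_diag : ∀ x, b' x x = 0) (hb'_row : ∀ x, Summable fun y => b' x y)
    (v : X → ℝ) (hv_pos : ∀ x, 0 < v x)
    (hv_mem : memF b v) (hv_super : ∀ x, 0 ≤ schrod b q v x)
    (hsv_mem : memF b' (fun x => Real.sqrt (v x)))
    (hsv_harm : ∀ x, schrod b' q' (fun z => Real.sqrt (v z)) x = 0)
    (hcrit : (∀ φ : X → ℝ, (Function.support φ).Finite → 0 ≤ quadForm b' q' φ) ∧
      ¬ ∃ wt : X → ℝ, (∀ x, 0 ≤ wt x) ∧ wt ≠ 0 ∧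
        (∀ φ : X → ℝ, (Function.support φ).Finite →
          quadForm b' q' φ ≥ ∑' x : X, wt x * φ x ^ 2))
    (W : Set X) (C : ℝ) (hC : 0 ≤ C)
    (hdom : ∀ φ : X → ℝ, (Function.support φ).Finite → (∀ x ∈ W, φ x = 0) →
      quadForm b q φ ≤ C * quadForm b' q' φ) :
    ∀ f : X → ℝ, (∀ x ∈ W, f x = 0) →
      extForm b v (fun x => f x / v x) ≤
        ENNReal.ofReal C *
          extForm b' (fun x => Real.sqrt (v x)) (fun x => f x / Real.sqrt (v x)) :=
  fun _ hf => stmt17_general ⟨hb_nonneg, hb_symm, hb_row⟩ ⟨hb'_nonneg, hb'_symm, hb'_row⟩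
    ⟨hv_pos, hv_mem, hv_super⟩
    ⟨fun x => Real.sqrt_pos.mpr (hv_pos x), hsv_mem, fun x => (hsv_harm x).ge⟩ hcrit.2 hC hdom hf
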